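/- arXiv:1111.2403 — 3 statements merged into one kernel-verified Lean document; each statement's English description precedes it below -/
import Mathlib

section
/- Let m ∈ ℕ and let n, k ∈ ℕ satisfy 2^k ≤ n < 2^{k+1} ≤ 4^m. Then W_m(n − 2^k) = W_m(n) · W_m(2^k), and moreover W_m(n) · W_m(2^k) = ε · W_m(2^k) · W_m(n), where ε = −1 if k is odd and 2^k + 2^{k−1} ≤ n < 2^{k+1}, and ε = 1 otherwise. -/
open Matrix

/-- The four 2×2 Rademacher matrices `r^{(γ₀,γ₁)}`, indexed by the two bits. -/
noncomputable def radMat : Bool → Bool → Matrix (Fin 2) (Fin 2) ℂ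
  | false, false => !![1, 0; 0, 1]
  | true,  false => !![1, 0; 0, -1]
  | false, true  => !![0, 1; 1, 0]
  | true,  true  => !![0, 1; -1, 0]

/-- The Walsh matrix `W_m(n) = r^{(γ₀,γ₁)} ⊗ r^{(γ₂,γ₃)} ⊗ ⋯ ⊗ r^{(γ_{2m-2},γ_{2m-1})}`
as a `2^m × 2^m` complex matrix, where `γ_i` are the binary digits of `n`. -/
noncomputable def walshMatrix : (m : ℕ) → ℕ → Matrix (Fin (2 ^ m)) (Fin (2 ^ m)) ℂ
  | 0, _ => 1
  | m + 1, n =>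
    Matrix.reindex
      ((finProdFinEquiv (m := 2) (n := 2 ^ m)).trans (finCongr (by ring)))
      ((finProdFinEquiv (m := 2) (n := 2 ^ m)).trans (finCongr (by ring)))
      (Matrix.kroneckerMap (· * ·) (radMat (n.testBit 0) (n.testBit 1)) (walshMatrix m (n / 4)))

theorem radMat_ff : radMat false false = 1 := by
  ext i j; fin_cases i <;> fin_cases j <;> simp [radMat]

/-- One Kronecker step. -/
noncomputable def kStep (m : ℕ) (a : Matrix (Fin 2) (Fin 2) ℂ)
    (A : Matrix (Fin (2 ^ m)) (Fin (2 ^ m)) ℂ) :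
    Matrix (Fin (2 ^ (m + 1))) (Fin (2 ^ (m + 1))) ℂ :=
  Matrix.reindex
      ((finProdFinEquiv (m := 2) (n := 2 ^ m)).trans (finCongr (by ring)))
      ((finProdFinEquiv (m := 2) (n := 2 ^ m)).trans (finCongr (by ring)))
      (Matrix.kroneckerMap (· * ·) a A)

theorem walsh_succ (m n : ℕ) : walshMatrix (m + 1) n =
    kStep m (radMat (n.testBit 0) (n.testBit 1)) (walshMatrix m (n / 4)) := rfl

theorem kStep_mul (m : ℕ) (a b : Matrix (Fin 2) (Fin 2) ℂ)
    (A B : Matrix (Fin (2 ^ m)) (Fin (2 ^ m)) ℂ) :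
    kStep m a A * kStep m b B = kStep m (a * b) (A * B) := by
  unfold kStep
  rw [Matrix.mul_kronecker_mul]
  simp only [Matrix.reindex_apply, Matrix.submatrix_mul_equiv]

theorem kStep_one (m : ℕ) : kStep m 1 1 = 1 := by
  unfold kStep
  rw [Matrix.one_kronecker_one]
  simp only [Matrix.reindex_apply, Matrix.submatrix_one_equiv]

theorem kStep_smul_right (m : ℕ) (c : ℂ) (a : Matrix (Fin 2) (Fin 2) ℂ)
    (A : Matrix (Fin (2 ^ m)) (Fin (2 ^ m)) ℂ) :
    kStep m a (c • A) = c • kStep m a A := by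
  ext i j
  simp [kStep, Matrix.kroneckerMap_apply]
  ring

theorem kStep_smul_left (m : ℕ) (c : ℂ) (a : Matrix (Fin 2) (Fin 2) ℂ)
    (A : Matrix (Fin (2 ^ m)) (Fin (2 ^ m)) ℂ) :
    kStep m (c • a) A = c • kStep m a A := by
  ext i j
  simp [kStep, Matrix.kroneckerMap_apply]
  ring

theorem walsh_zero (m : ℕ) : walshMatrix m 0 = 1 := by
  induction m with
  | zero => rfl
  | succ m ih =>
    rw [walsh_succ]
    simp [radMat_ff, ih, kStep_one]

theorem testBit_low (n : ℕ) : n.testBit 0 = decide (n % 4 % 2 = 1) ∧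
    n.testBit 1 = decide (n % 4 / 2 = 1) := by
  constructor
  · rw [Nat.testBit_zero]; congr 1; apply propext; omega
  · rw [Nat.testBit_succ, Nat.testBit_zero]; congr 1; apply propext; omega

theorem walsh_rademacher_relation (m n k : ℕ) (h₁ : 2 ^ k ≤ n) (h₂ : n < 2 ^ (k + 1))
    (h₃ : 2 ^ (k + 1) ≤ 4 ^ m) :
    walshMatrix m (n - 2 ^ k) = walshMatrix m n * walshMatrix m (2 ^ k) ∧
    walshMatrix m n * walshMatrix m (2 ^ k) =
      (if k % 2 = 1 ∧ 2 ^ k + 2 ^ (k - 1) ≤ n then (-1 : ℂ) else 1) •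
        (walshMatrix m (2 ^ k) * walshMatrix m n) := by
  induction m generalizing n k with
  | zero =>
    have := Nat.one_lt_two_pow (n := k + 1) (by omega)
    simp at h₃
  | succ m ih =>
    match k with
    | 0 =>
      obtain rfl : n = 1 := by simp at h₁ h₂; omega
      have e : radMat true false * radMat true false = radMat false false := by
        ext i j; fin_cases i <;> fin_cases j <;> simp [radMat]
      simp only [walsh_succ, kStep_mul]
      simp [walsh_zero, e, Nat.testBit_succ]
    | 1 =>
      have hn : n = 2 ∨ n = 3 := by simp at h₁ h₂; omega
      have e : radMat false true * radMat false true = radMat false false := by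
        ext i j; fin_cases i <;> fin_cases j <;> simp [radMat]
      have e1 : radMat true true * radMat false true = radMat true false := by
        ext i j; fin_cases i <;> fin_cases j <;> simp [radMat]
      have e2 : radMat false true * radMat true true = (-1 : ℂ) • radMat true false := by
        ext i j; fin_cases i <;> fin_cases j <;> simp [radMat]
      rcases hn with rfl | rfl
      · simp only [walsh_succ, kStep_mul]
        simp [walsh_zero, e, Nat.testBit_succ]
      · simp only [walsh_succ, kStep_mul]
        simp [walsh_zero, e1, e2, Nat.testBit_succ, kStep_smul_left, -neg_smul]
        rw [smul_smul]; norm_num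
    | k + 2 =>
      have p2 : 2 ^ (k + 2) = 4 * 2 ^ k := by ring
      have p3 : 2 ^ (k + 2 + 1) = 4 * 2 ^ (k + 1) := by ring
      have p4 : 4 ^ (m + 1) = 4 * 4 ^ m := by ring
      rw [p2] at h₁
      rw [p3] at h₂
      rw [p3, p4] at h₃
      obtain ⟨i1, i2⟩ := ih (n / 4) k (by omega) (by omega) (by omega)
      have hc : ((k + 2) % 2 = 1 ∧ 2 ^ (k + 2) + 2 ^ (k + 2 - 1) ≤ n) ↔
          (k % 2 = 1 ∧ 2 ^ k + 2 ^ (k - 1) ≤ n / 4) := by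
        rcases k with _ | k
        · simp
        · have q1 : 2 ^ (k + 1 + 2) = 8 * 2 ^ k := by ring
          have q2 : 2 ^ (k + 1 + 2 - 1) = 4 * 2 ^ k := by
            rw [show k + 1 + 2 - 1 = k + 2 by omega]; ring
          have q3 : 2 ^ (k + 1) = 2 * 2 ^ k := by ring
          rw [q1, q2, q3, Nat.add_sub_cancel]
          omega
      simp only [hc]
      have d1 : (n - 4 * 2 ^ k) / 4 = n / 4 - 2 ^ k := by omega
      have d2 : (4 * 2 ^ k) / 4 = 2 ^ k := by omega
      have d3 : (n - 4 * 2 ^ k) % 4 = n % 4 := by omega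
      have d4 : (4 * 2 ^ k) % 4 = 0 := by omega
      rw [p2]
      simp only [walsh_succ, kStep_mul, d1, d2, (testBit_low _).1, (testBit_low _).2, d3, d4]
      rw [i1]
      simp only [Nat.zero_mod, Nat.zero_div, zero_ne_one, decide_false, radMat_ff, mul_one,
        one_mul, true_and]
      rw [← kStep_smul_right, ← i2]
end

section
/- For every m ∈ ℕ and all n, i with 0 ≤ n, i < 4^m, there exists ε ∈ {1, −1} such that W_m(n) · W_m(i) = ε · W_m(n XOR i), where n XOR i denotes the bitwise exclusive-or of the binary expansions of n and i. -/
open Matrix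

theorem radMat_mul (a b c d : Bool) :
    ∃ ε : ℂ, (ε = 1 ∨ ε = -1) ∧ radMat a b * radMat c d = ε • radMat (a ^^ c) (b ^^ d) := by
  cases a <;> cases b <;> cases c <;> cases d <;>
  first
  | (refine ⟨1, Or.inl rfl, ?_⟩
     ext i j
     fin_cases i <;> fin_cases j <;> simp [radMat] <;> done)
  | (refine ⟨-1, Or.inr rfl, ?_⟩
     ext i j
     fin_cases i <;> fin_cases j <;> simp [radMat] <;> done)

theorem nat_xor_div_four (n i : ℕ) : (n ^^^ i) / 4 = (n / 4) ^^^ (i / 4) := by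
  have h := Nat.shiftRight_xor_distrib (a := n) (b := i) (i := 2)
  simpa [Nat.shiftRight_eq_div_pow] using h

theorem walshMatrix_mul (m n i : ℕ) (hn : n < 4 ^ m) (hi : i < 4 ^ m) :
    ∃ ε : ℂ, (ε = 1 ∨ ε = -1) ∧
      walshMatrix m n * walshMatrix m i = ε • walshMatrix m (n ^^^ i) := by
  induction m generalizing n i with
  | zero => exact ⟨1, Or.inl rfl, by simp [walshMatrix]⟩
  | succ m ih =>
    obtain ⟨e, he, hE⟩ := ih (n / 4) (i / 4) (by rw [pow_succ] at hn; omega)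
      (by rw [pow_succ] at hi; omega)
    obtain ⟨f, hf, hF⟩ := radMat_mul (n.testBit 0) (n.testBit 1) (i.testBit 0) (i.testBit 1)
    refine ⟨f * e, ?_, ?_⟩
    · rcases he with rfl | rfl <;> rcases hf with rfl | rfl <;> simp
    · simp only [walshMatrix, Matrix.reindex_apply, Matrix.submatrix_mul_equiv]
      rw [← Matrix.mul_kronecker_mul, hF, hE, nat_xor_div_four, Nat.testBit_xor, Nat.testBit_xor]
      ext a b
      simp only [Matrix.submatrix_apply, Matrix.kroneckerMap_apply, Matrix.smul_apply, smul_eq_mul]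
      ring
end

section
/- Let m ∈ ℕ and 0 ≤ n < 4^m with binary digits n = Σ_i γ_i 2^i. If γ_{2i+1} = 0 for every i, then W_m(n) is a diagonal matrix. If γ_{2i+1} = 1 for some i, then every diagonal entry of W_m(n) is zero; equivalently, the diagonal projection E (which sets all off-diagonal entries to 0) satisfies E(W_m(n)) = W_m(n) in the first case and E(W_m(n)) = 0 in the second. -/
open Matrix

theorem walsh_testBit_div_four (n k : ℕ) : (n / 4).testBit k = n.testBit (k + 2) := by
  rw [show (4 : ℕ) = 2 ^ 2 by norm_num, Nat.testBit_div_two_pow]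

theorem radMat_offdiag (b : Bool) (i j : Fin 2) (h : i ≠ j) : radMat b false i j = 0 := by
  cases b <;> fin_cases i <;> fin_cases j <;> simp_all [radMat]

theorem radMat_diag (b : Bool) (i : Fin 2) : radMat b true i i = 0 := by
  cases b <;> fin_cases i <;> simp [radMat]

theorem walsh_offdiag (m : ℕ) : ∀ n : ℕ, (∀ i : ℕ, n.testBit (2 * i + 1) = false) →
    ∀ j k, j ≠ k → walshMatrix m n j k = 0 := by
  induction m with
  | zero =>
    intro n _ j k h
    exact Matrix.one_apply_ne h
  | succ m ih =>
    intro n hn j k h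
    rw [walshMatrix, Matrix.reindex_apply, Matrix.submatrix_apply, Matrix.kroneckerMap_apply]
    generalize hE : ((finProdFinEquiv (m := 2) (n := 2 ^ m)).trans
      (finCongr (by ring : 2 * 2 ^ m = 2 ^ (m + 1)))) = e
    have hne : e.symm j ≠ e.symm k := fun hh => h (e.symm.injective hh)
    by_cases h1 : (e.symm j).1 = (e.symm k).1
    · have h2 : (e.symm j).2 ≠ (e.symm k).2 := fun hh => hne (Prod.ext h1 hh)
      rw [ih (n / 4) (fun i => by rw [walsh_testBit_div_four]; exact hn (i + 1)) _ _ h2, mul_zero]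
    · rw [show n.testBit 1 = false from hn 0, radMat_offdiag _ _ _ h1, zero_mul]

theorem walsh_diag (m : ℕ) : ∀ n : ℕ, n < 4 ^ m → (∃ i : ℕ, n.testBit (2 * i + 1) = true) →
    ∀ j, walshMatrix m n j j = 0 := by
  induction m with
  | zero =>
    rintro n hn ⟨i, hi⟩ j
    have : n = 0 := by simpa using hn
    simp [this] at hi
  | succ m ih =>
    rintro n hn ⟨i, hi⟩ j
    rw [walshMatrix, Matrix.reindex_apply, Matrix.submatrix_apply, Matrix.kroneckerMap_apply]
    cases i with
    | zero => rw [show n.testBit 1 = true from hi, radMat_diag, zero_mul]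
    | succ i =>
      rw [ih (n / 4) (by rw [pow_succ] at hn; omega)
        ⟨i, by rw [walsh_testBit_div_four]; exact hi⟩, mul_zero]

theorem walshMatrix_diagonal_projection (m n : ℕ) (hn : n < 4 ^ m) :
    ((∀ i : ℕ, n.testBit (2 * i + 1) = false) →
      Matrix.diagonal (fun j => walshMatrix m n j j) = walshMatrix m n) ∧
    ((∃ i : ℕ, n.testBit (2 * i + 1) = true) →
      (∀ j, walshMatrix m n j j = 0) ∧
        Matrix.diagonal (fun j => walshMatrix m n j j) = 0) := by
  refine ⟨fun h => ?_, fun h => ⟨walsh_diag m n hn h, ?_⟩⟩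
  · ext j k
    by_cases hjk : j = k
    · subst hjk
      rw [Matrix.diagonal_apply_eq]
    · rw [Matrix.diagonal_apply_ne _ hjk, walsh_offdiag m n h j k hjk]
  · ext j k
    by_cases hjk : j = k
    · subst hjk
      rw [Matrix.diagonal_apply_eq, walsh_diag m n hn h, Matrix.zero_apply]
    · rw [Matrix.diagonal_apply_ne _ hjk, Matrix.zero_apply]
end
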